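/- (Gabriel's Theorem, part 3) Let k be an algebraically closed field and let Q be a finite quiver of finite representation type (equivalently, with underlying graph a union of Dynkin graphs of type A, D, E). Then the map V ↦ d_V = (dim V_i)_{i∈Q_0} induces a bijection between the set of isomorphism classes of indecomposable representations of Q and the set of positive roots of the root system associated to the underlying graph of Q; equivalently, a bijection onto the set of nonzero vectors α ∈ Z_{≥0}^{Q_0} with q(α) = 1, where q is the Tits form of Q. -/

import Mathlib

/-! Statement 11 (Gabriel's theorem, part 3): for a quiver of finite representation type
over an algebraically closed field, V ↦ dim vector of V induces a bijection between
isomorphism classes of indecomposable representations and positive roots of the root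
system of the underlying graph, i.e. the nonzero α ∈ ℤ_{≥0}^{Q₀} with q(α) = 1 where q is
the Tits form. -/

/-- A finite-dimensional representation of the quiver `(I, E, s, t)` over the field `k`:
a finite-dimensional `k`-vector space `V i` for each vertex `i` and a `k`-linear map
`f e : V (s e) → V (t e)` for each arrow `e`. -/
structure QRep (k : Type) [Field k] (I E : Type) (s t : E → I) where
  V : I → Type
  [acg : ∀ i, AddCommGroup (V i)]
  [mod : ∀ i, Module k (V i)]
  [fd : ∀ i, FiniteDimensional k (V i)]
  f : ∀ e : E, V (s e) →ₗ[k] V (t e)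

attribute [instance] QRep.acg QRep.mod QRep.fd

namespace QRep

variable {k : Type} [Field k] {I E : Type} {s t : E → I}

/-- Isomorphism of quiver representations: a collection of linear equivalences commuting
with the structure maps. -/
def Iso (M N : QRep k I E s t) : Prop :=
  ∃ φ : ∀ i, M.V i ≃ₗ[k] N.V i,
    ∀ (e : E) (v : M.V (s e)), φ (t e) (M.f e v) = N.f e (φ (s e) v)

/-- Direct sum of two quiver representations, defined vertexwise and arrowwise. -/
def dsum (M N : QRep k I E s t) : QRep k I E s t where
  V i := M.V i × N.V i
  f e := (M.f e).prodMap (N.f e)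

/-- The trivial (zero) representation. -/
def zero (k : Type) [Field k] (I E : Type) (s t : E → I) : QRep k I E s t where
  V _ := PUnit
  f _ := 0

/-- A representation is trivial if all its vector spaces are zero. -/
def IsTrivial (M : QRep k I E s t) : Prop := ∀ i, Subsingleton (M.V i)

/-- A representation is indecomposable if it is nontrivial and not isomorphic to a direct
sum of two nontrivial representations. -/
def Indecomposable (M : QRep k I E s t) : Prop :=
  ¬ M.IsTrivial ∧
    ∀ A B : QRep k I E s t, ¬ A.IsTrivial → ¬ B.IsTrivial → ¬ M.Iso (A.dsum B)

/-- Finite direct sums of quiver representations. -/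
def dsumFin : (n : ℕ) → (Fin n → QRep k I E s t) → QRep k I E s t
  | 0, _ => zero k I E s t
  | n + 1, F => (F 0).dsum (dsumFin n fun a => F a.succ)

/-- The dimension vector of a representation. -/
noncomputable def dimVec (M : QRep k I E s t) : I → ℕ := fun i => Module.finrank k (M.V i)

end QRep

/-- A quiver has finite representation type over `k` if it has only finitely many
isomorphism classes of indecomposable (finite-dimensional) representations. -/
def FiniteRepType (k : Type) [Field k] (I E : Type) (s t : E → I) : Prop :=
  ∃ (n : ℕ) (F : Fin n → QRep k I E s t),
    ∀ M : QRep k I E s t, M.Indecomposable → ∃ a, M.Iso (F a)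

/-- The Tits form `q(α) = Σ_i α(i)² − Σ_ρ α(t(ρ))α(h(ρ))` of the quiver `(I, E, s, t)`.
For a quiver whose underlying graph is a simply-laced Dynkin graph, the positive roots of
the associated root system, written in the basis of simple roots, are exactly the nonzero
`α ∈ ℤ_{≥0}^{Q₀}` with `q(α) = 1`. -/
def titsForm (I E : Type) [Fintype I] [Fintype E] (s t : E → I) (α : I → ℕ) : ℤ :=
  ∑ i : I, (α i : ℤ) ^ 2 - ∑ e : E, (α (s e) : ℤ) * (α (t e) : ℤ)

/-!
Write `Hom` and `Ext¹` as kernel and cokernel of the two-term complex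
`⨁ᵢ Hom(Mᵢ, Nᵢ) → ⨁ₑ Hom(M_{s(e)}, N_{t(e)})`; its Euler characteristic is the Euler form of the
dimension vectors, so a rigid representation `M` has `q(dim M) = dim End M`.

A brick with a nonzero self-extension could be glued to itself arbitrarily often into ever larger
indecomposables, so in bounded representation type bricks are rigid. By Ringel's argument an
indecomposable which is not a brick produces a smaller indecomposable which is not rigid; hence, by
induction on the dimension, all indecomposables are rigid bricks and `q(dim M) = 1`.

Conversely, among the representations of dimension vector `α` one minimising `dim End` is rigid,
since a non-split extension has fewer endomorphisms than the split one; if `q(α) = 1` it is a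
brick. Finally, two rigid representations of the same dimension vector `α` with `q(α) = 1` are
isomorphic because any nonzero morphism between them is onto.
-/

namespace QRep

variable {k : Type} [Field k] {I E : Type} {s t : E → I}

/-! ### Morphisms, extensions and the standard complex -/

/-- A family of linear maps between the vertex spaces of two representations, with no
compatibility with the arrows required. -/
abbrev VertexMap (M N : QRep k I E s t) : Type := ∀ i, M.V i →ₗ[k] N.V i

/-- A family of linear maps along the arrows. These are the 1-cochains of the complex whose
cohomology is `Hom` and `Ext¹`. -/
abbrev ArrowMap (M N : QRep k I E s t) : Type := ∀ e, M.V (s e) →ₗ[k] N.V (t e)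

/-- The identity family. -/
def VertexMap.id (M : QRep k I E s t) : VertexMap M M := fun _ => LinearMap.id

/-- Vertexwise composition. -/
def VertexMap.comp {M N L : QRep k I E s t} (ψ : VertexMap N L) (φ : VertexMap M N) :
    VertexMap M L :=
  fun i => ψ i ∘ₗ φ i

/-- A family of vertex maps is a morphism of representations. -/
def IsHom {M N : QRep k I E s t} (φ : VertexMap M N) : Prop :=
  ∀ (e : E) (v : M.V (s e)), φ (t e) (M.f e v) = N.f e (φ (s e) v)

/-- The differential of the two-term complex `VertexMap M N → ArrowMap M N`, with kernel
`Hom(M, N)` and cokernel `Ext¹(M, N)`. -/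
def coboundary (M N : QRep k I E s t) : VertexMap M N →ₗ[k] ArrowMap M N where
  toFun φ e := N.f e ∘ₗ φ (s e) - φ (t e) ∘ₗ M.f e
  map_add' φ ψ := by
    ext e v
    simp only [Pi.add_apply, LinearMap.sub_apply, LinearMap.comp_apply, LinearMap.add_apply,
      map_add]
    abel
  map_smul' c φ := by
    ext e v
    simp [smul_sub]

/-- The space of morphisms `M → N`. -/
def homs (M N : QRep k I E s t) : Submodule k (VertexMap M N) := LinearMap.ker (coboundary M N)

/-- `dim Hom(M, N)`. -/
noncomputable def homDim (M N : QRep k I E s t) : ℕ := Module.finrank k (homs M N)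

/-- `dim Ext¹(M, N)`. -/
noncomputable def extDim (M N : QRep k I E s t) : ℕ :=
  Module.finrank k (ArrowMap M N ⧸ LinearMap.range (coboundary M N))

/-- `Ext¹(M, N) = 0`. -/
def ExtVanishes (M N : QRep k I E s t) : Prop := Function.Surjective (coboundary M N)

/-- `M` has no self-extensions. -/
def IsRigid (M : QRep k I E s t) : Prop := ExtVanishes M M

/-- A brick: a nontrivial representation whose endomorphisms are the scalars. -/
def IsBrick (M : QRep k I E s t) : Prop :=
  ¬ M.IsTrivial ∧ ∀ φ : VertexMap M M, IsHom φ → ∃ c : k, φ = c • VertexMap.id M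

section Hom

variable {M N L : QRep k I E s t}

@[simp]
theorem VertexMap.id_apply (i : I) (v : M.V i) : VertexMap.id M i v = v := rfl

@[simp]
theorem VertexMap.comp_apply (ψ : VertexMap N L) (φ : VertexMap M N) (i : I) (v : M.V i) :
    ψ.comp φ i v = ψ i (φ i v) := rfl

theorem VertexMap.exists_apply_ne_zero {φ : VertexMap M N} (hφ : φ ≠ 0) :
    ∃ i v, φ i v ≠ 0 := by
  by_contra! hzero
  exact hφ (by ext i v; exact hzero i v)

theorem coboundary_apply (φ : VertexMap M N) (e : E) (v : M.V (s e)) :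
    coboundary M N φ e v = N.f e (φ (s e) v) - φ (t e) (M.f e v) := rfl

theorem isHom_iff_coboundary_eq_zero {φ : VertexMap M N} :
    IsHom φ ↔ coboundary M N φ = 0 := by
  simp only [IsHom, funext_iff, LinearMap.ext_iff, coboundary_apply, Pi.zero_apply,
    LinearMap.zero_apply, sub_eq_zero]
  exact forall₂_congr fun _ _ => eq_comm

theorem mem_homs {φ : VertexMap M N} : φ ∈ homs M N ↔ IsHom φ :=
  isHom_iff_coboundary_eq_zero.symm

theorem IsHom.coboundary_eq_zero {φ : VertexMap M N} (hφ : IsHom φ) : coboundary M N φ = 0 :=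
  isHom_iff_coboundary_eq_zero.mp hφ

theorem isHom_id (M : QRep k I E s t) : IsHom (VertexMap.id M) := fun _ _ => rfl

theorem IsHom.sub {φ ψ : VertexMap M N} (hφ : IsHom φ) (hψ : IsHom ψ) : IsHom (φ - ψ) :=
  mem_homs.mp ((homs M N).sub_mem (mem_homs.mpr hφ) (mem_homs.mpr hψ))

theorem IsHom.smul {φ : VertexMap M N} (hφ : IsHom φ) (c : k) : IsHom (c • φ) :=
  mem_homs.mp ((homs M N).smul_mem c (mem_homs.mpr hφ))

theorem IsHom.comp {ψ : VertexMap N L} {φ : VertexMap M N} (hψ : IsHom ψ) (hφ : IsHom φ) :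
    IsHom (ψ.comp φ) := fun e v => by
  simp only [VertexMap.comp_apply, hφ e, hψ e]

theorem coboundary_comp_hom {φ : VertexMap M N} (hφ : IsHom φ) (ψ : VertexMap N L) :
    coboundary M L (ψ.comp φ) = fun e => coboundary N L ψ e ∘ₗ φ (s e) := by
  ext e v
  simp [coboundary_apply, hφ e]

theorem coboundary_hom_comp {ψ : VertexMap N L} (hψ : IsHom ψ) (φ : VertexMap M N) :
    coboundary M L (ψ.comp φ) = fun e => ψ (t e) ∘ₗ coboundary M N φ e := by
  ext e v
  simp [coboundary_apply, hψ e]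

/-- The map `Hom(N, L) → Hom(M, L)` induced by a morphism `M → N`. -/
def precomp {φ : VertexMap M N} (hφ : IsHom φ) (L : QRep k I E s t) :
    homs N L →ₗ[k] homs M L where
  toFun ψ := ⟨ψ.1.comp φ, mem_homs.mpr ((mem_homs.mp ψ.2).comp hφ)⟩
  map_add' _ _ := rfl
  map_smul' _ _ := rfl

/-- The map `Hom(M, N) → Hom(M, L)` induced by a morphism `N → L`. -/
def postcomp {ψ : VertexMap N L} (hψ : IsHom ψ) (M : QRep k I E s t) :
    homs M N →ₗ[k] homs M L where
  toFun φ := ⟨ψ.comp φ.1, mem_homs.mpr (hψ.comp (mem_homs.mp φ.2))⟩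
  map_add' _ _ := by ext; simp
  map_smul' _ _ := by ext; simp

theorem ExtVanishes.of_surjective {ψ : VertexMap N L} (h : ExtVanishes M N) (hψ : IsHom ψ)
    (hsurj : ∀ i, Function.Surjective (ψ i)) : ExtVanishes M L := by
  intro η
  have hlift : ∀ i, ∃ g : L.V i →ₗ[k] N.V i, ψ i ∘ₗ g = LinearMap.id := fun i =>
    LinearMap.exists_rightInverse_of_surjective _ (LinearMap.range_eq_top.mpr (hsurj i))
  choose g hg using hlift
  obtain ⟨φ, hφ⟩ := h fun e => g (t e) ∘ₗ η e
  refine ⟨ψ.comp φ, ?_⟩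
  rw [coboundary_hom_comp hψ, hφ]
  ext e v
  exact LinearMap.congr_fun (hg (t e)) (η e v)

theorem isTrivial_iff_id_eq_zero : M.IsTrivial ↔ VertexMap.id M = 0 := by
  refine ⟨fun h => ?_, fun h i => ⟨fun v w => ?_⟩⟩
  · ext i v
    exact (h i).elim _ _
  · have hzero : ∀ u : M.V i, u = 0 := LinearMap.congr_fun (congrFun h i)
    rw [hzero v, hzero w]

theorem isTrivial_of_forall_eq_zero (h : ∀ i (v : M.V i), v = 0) : M.IsTrivial :=
  fun i => ⟨fun v w => (h i v).trans (h i w).symm⟩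

theorem isTrivial_iff_dimVec_eq_zero : M.IsTrivial ↔ M.dimVec = 0 := by
  simp only [IsTrivial, funext_iff, dimVec, Pi.zero_apply, Module.finrank_zero_iff]

theorem ExtVanishes.of_isTrivial (hM : M.IsTrivial) (N : QRep k I E s t) : ExtVanishes M N := by
  refine fun η => ⟨0, ?_⟩
  ext e v
  rw [(hM (s e)).elim v 0, map_zero, map_zero]

theorem Iso.symm (h : M.Iso N) : N.Iso M := by
  obtain ⟨φ, hφ⟩ := h
  refine ⟨fun i => (φ i).symm, fun e v => (φ (t e)).injective ?_⟩
  simp only [hφ, LinearEquiv.apply_symm_apply]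

theorem Iso.dimVec_eq (h : M.Iso N) : M.dimVec = N.dimVec := by
  obtain ⟨φ, -⟩ := h
  exact funext fun i => (φ i).finrank_eq

theorem IsHom.iso_of_bijective {φ : VertexMap M N} (hφ : IsHom φ)
    (hbij : ∀ i, Function.Bijective (φ i)) : M.Iso N :=
  ⟨fun i => LinearEquiv.ofBijective (φ i) (hbij i), hφ⟩

theorem dimVec_dsum (M N : QRep k I E s t) : (M.dsum N).dimVec = M.dimVec + N.dimVec :=
  funext fun _ => Module.finrank_prod

end Hom

/-! ### Subrepresentations and quotients -/

/-- A family of subspaces stable under the arrows. -/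
def IsSubrep (M : QRep k I E s t) (P : ∀ i, Submodule k (M.V i)) : Prop :=
  ∀ e, P (s e) ≤ (P (t e)).comap (M.f e)

section Subrep

variable {M N : QRep k I E s t} {P : ∀ i, Submodule k (M.V i)}

/-- The representation on a stable family of subspaces. -/
def sub (hP : M.IsSubrep P) : QRep k I E s t where
  V i := P i
  f e := (M.f e).restrict (hP e)

/-- The quotient of a representation by a stable family of subspaces. -/
def quot (hP : M.IsSubrep P) : QRep k I E s t where
  V i := M.V i ⧸ P i
  f e := (P (s e)).mapQ (P (t e)) (M.f e) (hP e)

/-- The inclusion of a subrepresentation. -/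
def incl (hP : M.IsSubrep P) : VertexMap (sub hP) M := fun i => (P i).subtype

/-- The projection onto a quotient representation. -/
def mkQ (hP : M.IsSubrep P) : VertexMap M (quot hP) := fun i => (P i).mkQ

theorem isHom_incl (hP : M.IsSubrep P) : IsHom (incl hP) := fun _ _ => rfl

theorem isHom_mkQ (hP : M.IsSubrep P) : IsHom (mkQ hP) := fun _ _ => rfl

theorem incl_injective (hP : M.IsSubrep P) (i : I) : Function.Injective (incl hP i) :=
  (P i).injective_subtype

theorem incl_mem (hP : M.IsSubrep P) (i : I) (v : (sub hP).V i) : incl hP i v ∈ P i := v.2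

theorem mkQ_surjective (hP : M.IsSubrep P) (i : I) : Function.Surjective (mkQ hP i) :=
  (P i).mkQ_surjective

theorem mkQ_eq_zero_iff (hP : M.IsSubrep P) {i : I} {v : M.V i} :
    mkQ hP i v = 0 ↔ v ∈ P i :=
  Submodule.Quotient.mk_eq_zero _

theorem dimVec_quot_add_dimVec_sub (hP : M.IsSubrep P) :
    (quot hP).dimVec + (sub hP).dimVec = M.dimVec :=
  funext fun i => (P i).finrank_quotient_add_finrank

/-- Corestriction of a vertex map with values in a subrepresentation. -/
def corestrict (hP : M.IsSubrep P) (φ : VertexMap N M) (hφ : ∀ i v, φ i v ∈ P i) :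
    VertexMap N (sub hP) :=
  fun i => (φ i).codRestrict (P i) (hφ i)

theorem IsHom.corestrict (hP : M.IsSubrep P) {φ : VertexMap N M} (h : IsHom φ)
    (hφ : ∀ i v, φ i v ∈ P i) : IsHom (QRep.corestrict hP φ hφ) :=
  fun e v => Subtype.ext (h e v)

theorem IsHom.isSubrep_ker {φ : VertexMap M N} (hφ : IsHom φ) :
    M.IsSubrep fun i => LinearMap.ker (φ i) := fun e v hv => by
  rw [Submodule.mem_comap, LinearMap.mem_ker, hφ e, LinearMap.mem_ker.mp hv, map_zero]

theorem IsHom.isSubrep_range {φ : VertexMap N M} (hφ : IsHom φ) :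
    M.IsSubrep fun i => LinearMap.range (φ i) := by
  rintro e _ ⟨v, rfl⟩
  exact ⟨N.f e v, hφ e v⟩

theorem iso_dsum_of_isCompl {Q : ∀ i, Submodule k (M.V i)} (hP : M.IsSubrep P)
    (hQ : M.IsSubrep Q) (h : ∀ i, IsCompl (P i) (Q i)) : M.Iso ((sub hP).dsum (sub hQ)) :=
  Iso.symm ⟨fun i => Submodule.prodEquivOfIsCompl _ _ (h i), fun e v =>
    (map_add (M.f e) (incl hP (s e) v.1) (incl hQ (s e) v.2)).symm⟩

end Subrep

/-! ### Retracts and indecomposability -/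

/-- `A` as a direct summand of `M`: a split monomorphism `ι` with a chosen retraction `π`. -/
structure Retract (A M : QRep k I E s t) where
  ι : VertexMap A M
  π : VertexMap M A
  isHom_ι : IsHom ι
  isHom_π : IsHom π
  π_ι : ∀ i v, π i (ι i v) = v

section Retract

variable {A B M N : QRep k I E s t}

/-- `M` as a summand of itself. -/
def Retract.refl (M : QRep k I E s t) : Retract M M :=
  ⟨VertexMap.id M, VertexMap.id M, isHom_id M, isHom_id M, fun _ _ => rfl⟩

/-- A summand of a summand is a summand. -/
def Retract.trans (q : Retract A B) (r : Retract B M) : Retract A M where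
  ι := r.ι.comp q.ι
  π := q.π.comp r.π
  isHom_ι := r.isHom_ι.comp q.isHom_ι
  isHom_π := q.isHom_π.comp r.isHom_π
  π_ι i v := by simp only [VertexMap.comp_apply, r.π_ι, q.π_ι]

/-- `M` is the internal direct sum of its summands `A` and `B`. -/
def Retract.Complementary (a : Retract A M) (b : Retract B M) : Prop :=
  ∀ i v, a.ι i (a.π i v) + b.ι i (b.π i v) = v

/-- The first summand of a direct sum. -/
def Retract.inl (A B : QRep k I E s t) : Retract A (A.dsum B) where
  ι i := LinearMap.inl k (A.V i) (B.V i)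
  π i := LinearMap.fst k (A.V i) (B.V i)
  isHom_ι e _ := Prod.ext rfl (map_zero (B.f e)).symm
  isHom_π _ _ := rfl
  π_ι _ _ := rfl

/-- The second summand of a direct sum. -/
def Retract.inr (A B : QRep k I E s t) : Retract B (A.dsum B) where
  ι i := LinearMap.inr k (A.V i) (B.V i)
  π i := LinearMap.snd k (A.V i) (B.V i)
  isHom_ι e _ := Prod.ext (map_zero (A.f e)).symm rfl
  isHom_π _ _ := rfl
  π_ι _ _ := rfl

theorem Retract.complementary_inl_inr (A B : QRep k I E s t) :
    (inl A B).Complementary (inr A B) :=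
  fun _ v => Prod.fst_add_snd v

theorem Iso.exists_complementary (h : M.Iso (A.dsum B)) :
    ∃ (a : Retract A M) (b : Retract B M), a.Complementary b := by
  obtain ⟨φ, hφ⟩ := h
  let r : Retract (A.dsum B) M :=
    ⟨fun i => (φ i).symm, fun i => φ i, fun e v => (φ (t e)).injective (by simp [hφ]), hφ,
      fun i v => (φ i).apply_symm_apply v⟩
  refine ⟨(Retract.inl A B).trans r, (Retract.inr A B).trans r, fun i v => ?_⟩
  simp only [Retract.trans, VertexMap.comp_apply, ← map_add,
    Retract.complementary_inl_inr A B i (r.π i v)]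
  exact (φ i).symm_apply_apply v

theorem Retract.Complementary.symm {a : Retract A M} {b : Retract B M}
    (h : a.Complementary b) : b.Complementary a :=
  fun i v => (add_comm _ _).trans (h i v)

theorem Retract.Complementary.π_ι_eq_zero {a : Retract A M} {b : Retract B M}
    (h : a.Complementary b) (i : I) (v : B.V i) : a.π i (b.ι i v) = 0 := by
  have hι : a.ι i (a.π i (b.ι i v)) = 0 := by
    simpa only [b.π_ι, add_eq_right] using h i (b.ι i v)
  rw [← a.π_ι i (a.π i (b.ι i v)), hι, map_zero]

theorem ExtVanishes.of_iso_dsum_left (h : M.Iso (A.dsum B)) (hA : ExtVanishes A N)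
    (hB : ExtVanishes B N) : ExtVanishes M N := by
  obtain ⟨a, b, hab⟩ := h.exists_complementary
  intro η
  obtain ⟨φ, hφ⟩ := hA fun e => η e ∘ₗ a.ι (s e)
  obtain ⟨ψ, hψ⟩ := hB fun e => η e ∘ₗ b.ι (s e)
  refine ⟨φ.comp a.π + ψ.comp b.π, ?_⟩
  rw [map_add, coboundary_comp_hom a.isHom_π, coboundary_comp_hom b.isHom_π, hφ, hψ]
  ext e v
  exact (map_add (η e) _ _).symm.trans (congrArg (η e) (hab (s e) v))

theorem ExtVanishes.of_iso_dsum_right (h : N.Iso (A.dsum B)) (hA : ExtVanishes M A)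
    (hB : ExtVanishes M B) : ExtVanishes M N := by
  obtain ⟨a, b, hab⟩ := h.exists_complementary
  intro η
  obtain ⟨φ, hφ⟩ := hA fun e => a.π (t e) ∘ₗ η e
  obtain ⟨ψ, hψ⟩ := hB fun e => b.π (t e) ∘ₗ η e
  refine ⟨a.ι.comp φ + b.ι.comp ψ, ?_⟩
  rw [map_add, coboundary_hom_comp a.isHom_ι, coboundary_hom_comp b.isHom_ι, hφ, hψ]
  ext e v
  exact hab (t e) (η e v)

theorem Iso.homDim_add_le_left [Finite I] (h : M.Iso (A.dsum B)) (N : QRep k I E s t) :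
    homDim A N + homDim B N ≤ homDim M N := by
  obtain ⟨a, b, hab⟩ := h.exists_complementary
  have hinj : Function.Injective ((precomp a.isHom_π N).coprod (precomp b.isHom_π N)) := by
    refine (injective_iff_map_eq_zero _).mpr fun ⟨φ, ψ⟩ hzero => ?_
    have hsum : ∀ i v, φ.1 i (a.π i v) + ψ.1 i (b.π i v) = 0 := fun i =>
      LinearMap.congr_fun (congrFun (congrArg Subtype.val hzero) i)
    ext i v
    · simpa [a.π_ι, hab.symm.π_ι_eq_zero] using hsum i (a.ι i v)
    · simpa [b.π_ι, hab.π_ι_eq_zero] using hsum i (b.ι i v)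
  exact Module.finrank_prod.symm.trans_le (LinearMap.finrank_le_finrank_of_injective hinj)

theorem Iso.homDim_add_le_right [Finite I] (h : M.Iso (A.dsum B)) (N : QRep k I E s t) :
    homDim N A + homDim N B ≤ homDim N M := by
  obtain ⟨a, b, hab⟩ := h.exists_complementary
  have hinj : Function.Injective ((postcomp a.isHom_ι N).coprod (postcomp b.isHom_ι N)) := by
    refine (injective_iff_map_eq_zero _).mpr fun ⟨φ, ψ⟩ hzero => ?_
    have hsum : ∀ i v, a.ι i (φ.1 i v) + b.ι i (ψ.1 i v) = 0 := fun i =>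
      LinearMap.congr_fun (congrFun (congrArg Subtype.val hzero) i)
    ext i v
    · simpa [a.π_ι, hab.π_ι_eq_zero] using congrArg (a.π i) (hsum i v)
    · simpa [b.π_ι, hab.symm.π_ι_eq_zero] using congrArg (b.π i) (hsum i v)
  exact Module.finrank_prod.symm.trans_le (LinearMap.finrank_le_finrank_of_injective hinj)

theorem Retract.π_sub_ι_π (r : Retract A M) (i : I) (v : M.V i) :
    r.π i (v - r.ι i (r.π i v)) = 0 := by
  rw [map_sub, r.π_ι, sub_self]

theorem Retract.iso_dsum_ker (r : Retract A M) :
    M.Iso (A.dsum (sub r.isHom_π.isSubrep_ker)) := by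
  let compl : VertexMap M (sub r.isHom_π.isSubrep_ker) :=
    corestrict r.isHom_π.isSubrep_ker (VertexMap.id M - r.ι.comp r.π) r.π_sub_ι_π
  have hcompl : IsHom compl :=
    ((isHom_id M).sub (r.isHom_ι.comp r.isHom_π)).corestrict _ r.π_sub_ι_π
  have hhom : IsHom (N := A.dsum (sub r.isHom_π.isSubrep_ker))
      fun i => (r.π i).prod (compl i) :=
    fun e v => Prod.ext (r.isHom_π e v) (hcompl e v)
  refine hhom.iso_of_bijective fun i => ⟨(injective_iff_map_eq_zero _).mpr fun v hv => ?_, ?_⟩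
  · have hπ : r.π i v = 0 := congrArg Prod.fst hv
    have hsub : v - r.ι i (r.π i v) = 0 := congrArg (fun w => incl _ i w.2) hv
    rwa [hπ, map_zero, sub_zero] at hsub
  · rintro ⟨a, w⟩
    have hw : r.π i w.1 = 0 := w.2
    refine ⟨r.ι i a + w.1, Prod.ext ?_ (Subtype.ext ?_)⟩
    · change r.π i (r.ι i a + w.1) = a
      rw [map_add, r.π_ι, hw, add_zero]
    · change r.ι i a + w.1 - r.ι i (r.π i (r.ι i a + w.1)) = w.1
      rw [map_add (r.π i), r.π_ι, hw, add_zero, add_sub_cancel_left]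

theorem Indecomposable.ι_π_eq_self (hM : M.Indecomposable) (hA : ¬ A.IsTrivial)
    (r : Retract A M) (i : I) (v : M.V i) : r.ι i (r.π i v) = v := by
  have hker : (sub r.isHom_π.isSubrep_ker).IsTrivial :=
    by_contra fun hker => hM.2 _ _ hA hker r.iso_dsum_ker
  have hsub : v - r.ι i (r.π i v) = 0 :=
    congrArg Subtype.val ((hker i).elim ⟨_, r.π_sub_ι_π i v⟩ 0)
  exact (sub_eq_zero.mp hsub).symm

theorem indecomposable_of_idempotent (hM : ¬ M.IsTrivial)
    (h : ∀ e : VertexMap M M, IsHom e → e.comp e = e → e = 0 ∨ e = VertexMap.id M) :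
    M.Indecomposable := by
  refine ⟨hM, fun A B hA hB hiso => ?_⟩
  obtain ⟨a, b, hab⟩ := hiso.exists_complementary
  have hidem : (a.ι.comp a.π).comp (a.ι.comp a.π) = a.ι.comp a.π := by
    ext i v
    simp only [VertexMap.comp_apply, a.π_ι]
  rcases h _ (a.isHom_ι.comp a.isHom_π) hidem with hzero | hid
  · refine hA (isTrivial_of_forall_eq_zero fun i v => ?_)
    have hι : a.ι i (a.π i (a.ι i v)) = 0 := LinearMap.congr_fun (congrFun hzero i) _
    rw [← a.π_ι i v, ← a.π_ι i (a.π i (a.ι i v)), hι, map_zero]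
  · refine hB (isTrivial_of_forall_eq_zero fun i v => ?_)
    have hι : a.ι i (a.π i (b.ι i v)) = b.ι i v := LinearMap.congr_fun (congrFun hid i) _
    rw [hab.π_ι_eq_zero, map_zero] at hι
    rw [← b.π_ι i v, ← hι, map_zero]

theorem indecomposable_of_homs_eq_smul {π : VertexMap M N} (hπ : IsHom π) (hπ_ne : π ≠ 0)
    (hsmul : ∀ ψ : VertexMap M N, IsHom ψ → ∃ c : k, ψ = c • π)
    (hidem : ∀ e : VertexMap M M, IsHom e → e.comp e = e → π.comp e = 0 → e = 0) :
    M.Indecomposable := by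
  obtain ⟨i, v, hv⟩ := VertexMap.exists_apply_ne_zero hπ_ne
  refine indecomposable_of_idempotent
    (fun hM => hv (by rw [(hM i).elim v 0, map_zero])) fun e he hee => ?_
  have hee' : ∀ j w, e j (e j w) = e j w := fun j => LinearMap.congr_fun (congrFun hee j)
  obtain ⟨c, hc⟩ := hsmul _ (hπ.comp he)
  have hc' : ∀ j w, π j (e j w) = c • π j w := fun j => LinearMap.congr_fun (congrFun hc j)
  have hcc : c * c = c := smul_left_injective k hv <| by
    simp only [mul_smul, ← hc', hee']
  rcases IsIdempotentElem.iff_eq_zero_or_one.mp hcc with rfl | rfl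
  · exact .inl (hidem e he hee (hc.trans (zero_smul k π)))
  · refine .inr (sub_eq_zero.mp (hidem _ ((isHom_id M).sub he) ?_ ?_)).symm
    · ext j w
      simp [hee']
    · ext j w
      simp [hc']

theorem IsBrick.indecomposable (hM : M.IsBrick) : M.Indecomposable :=
  indecomposable_of_homs_eq_smul (isHom_id M) (mt isTrivial_iff_id_eq_zero.mpr hM.1) hM.2
    fun _ _ _ h => h

theorem Indecomposable.ker_eq_bot_or_eq_zero (hM : M.Indecomposable) {θ : VertexMap M M}
    (hθ : IsHom θ) (hker : ∀ i v, θ i (θ i v) = 0 → θ i v = 0) :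
    (∀ i, LinearMap.ker (θ i) = ⊥) ∨ θ = 0 := by
  have hcompl : ∀ i, IsCompl (LinearMap.ker (θ i)) (LinearMap.range (θ i)) := fun i => by
    refine ((Submodule.isCompl_iff_disjoint _ _
      (LinearMap.finrank_range_add_finrank_ker (θ i)).ge).mpr ?_).symm
    rw [Submodule.disjoint_def]
    rintro _ ⟨v, rfl⟩ hv
    exact hker i v hv
  by_cases hK : (sub hθ.isSubrep_ker).IsTrivial
  · exact .inl fun i => Submodule.subsingleton_iff_eq_bot.mp (hK i)
  · have hR : (sub hθ.isSubrep_range).IsTrivial := by_contra fun hR =>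
      hM.2 _ _ hK hR (iso_dsum_of_isCompl hθ.isSubrep_ker hθ.isSubrep_range hcompl)
    refine .inr (funext fun i => LinearMap.range_eq_bot.mp ?_)
    exact Submodule.subsingleton_iff_eq_bot.mp (hR i)

end Retract

/-! ### Extensions -/

/-- The extension `0 → V → extension η → U → 0` with class `η ∈ Ext¹(U, V)`. -/
def extension {U V : QRep k I E s t} (η : ArrowMap U V) : QRep k I E s t where
  V i := V.V i × U.V i
  f e := (V.f e ∘ₗ LinearMap.fst k _ _ + η e ∘ₗ LinearMap.snd k _ _).prod
    (U.f e ∘ₗ LinearMap.snd k _ _)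

namespace extension

variable {U V N : QRep k I E s t} (η : ArrowMap U V)

/-- The inclusion of the subrepresentation `V`. -/
def inl : VertexMap V (extension η) := fun _ => LinearMap.inl k _ _

/-- The linear complement to `V` given by the construction; not a morphism unless `η = 0`. -/
def inr : VertexMap U (extension η) := fun _ => LinearMap.inr k _ _

/-- The linear projection onto `V` along `inr`; not a morphism unless `η = 0`. -/
def fst : VertexMap (extension η) V := fun _ => LinearMap.fst k _ _

/-- The projection onto the quotient `U`. -/
def snd : VertexMap (extension η) U := fun _ => LinearMap.snd k _ _

theorem isHom_inl : IsHom (inl η) := fun e v => by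
  refine Prod.ext ?_ (map_zero (U.f e)).symm
  change V.f e v = V.f e v + η e 0
  rw [map_zero, add_zero]

theorem isHom_snd : IsHom (snd η) := fun _ _ => rfl

theorem inl_fst_add_inr_snd (i : I) (x : (extension η).V i) :
    inl η i (fst η i x) + inr η i (snd η i x) = x :=
  Prod.fst_add_snd x

variable {η}

theorem coboundary_comp_inr {ψ : VertexMap (extension η) N} (hψ : IsHom ψ) :
    coboundary U N (ψ.comp (inr η)) = fun e => (ψ.comp (inl η)) (t e) ∘ₗ η e := by
  ext e u
  have hf : (extension η).f e (inr η (s e) u) = inl η (t e) (η e u) + inr η (t e) (U.f e u) := by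
    refine Prod.ext ?_ (zero_add _).symm
    change V.f e 0 + η e u = η e u + 0
    rw [map_zero, zero_add, add_zero]
  simp only [coboundary_apply, VertexMap.comp_apply, LinearMap.comp_apply, ← hψ e, hf, map_add,
    add_sub_cancel_right]

theorem eq_comp_snd {ψ : VertexMap (extension η) N} (hinl : ψ.comp (inl η) = 0) :
    ψ = (ψ.comp (inr η)).comp (snd η) := by
  ext i x
  have hzero : ψ i (inl η i (fst η i x)) = 0 := LinearMap.congr_fun (congrFun hinl i) _
  calc ψ i x = ψ i (inl η i (fst η i x) + inr η i (snd η i x)) := by rw [inl_fst_add_inr_snd]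
    _ = ψ i (inr η i (snd η i x)) := by rw [map_add, hzero, zero_add]

theorem isHom_comp_inr {ψ : VertexMap (extension η) N} (hψ : IsHom ψ)
    (hinl : ψ.comp (inl η) = 0) : IsHom (ψ.comp (inr η)) := by
  rw [isHom_iff_coboundary_eq_zero, coboundary_comp_inr hψ, hinl]
  rfl

theorem isHom_fst_comp {φ : VertexMap N (extension η)} (hφ : IsHom φ)
    (hsnd : (snd η).comp φ = 0) : IsHom ((fst η).comp φ) := fun e v => by
  have hzero : snd η (s e) (φ (s e) v) = 0 := LinearMap.congr_fun (congrFun hsnd (s e)) v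
  have hf : ∀ x, fst η (t e) ((extension η).f e x) = V.f e (fst η (s e) x) + η e (snd η (s e) x) :=
    fun _ => rfl
  simp only [VertexMap.comp_apply, hφ e, hf, hzero, map_zero, add_zero]

theorem eq_inl_comp {φ : VertexMap N (extension η)} (hsnd : (snd η).comp φ = 0) :
    φ = (inl η).comp ((fst η).comp φ) := by
  ext i v
  have hzero : snd η i (φ i v) = 0 := LinearMap.congr_fun (congrFun hsnd i) v
  calc φ i v = inl η i (fst η i (φ i v)) + inr η i (snd η i (φ i v)) :=
        (inl_fst_add_inr_snd η i _).symm
    _ = inl η i (fst η i (φ i v)) := by rw [hzero, map_zero, add_zero]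

theorem comp_eq_zero_of_idempotent {e : VertexMap N N} (he : IsHom e) (hee : e.comp e = e)
    (hU : ∀ ψ : VertexMap N U, IsHom ψ → ψ.comp e = 0)
    (hV : ∀ ψ : VertexMap N V, IsHom ψ → ψ.comp e = 0)
    {φ : VertexMap N (extension η)} (hφ : IsHom φ) : φ.comp e = 0 := by
  have hsnd : (snd η).comp (φ.comp e) = 0 := hU _ ((isHom_snd η).comp hφ)
  have hfst : ((fst η).comp (φ.comp e)).comp e = 0 :=
    hV _ (isHom_fst_comp (hφ.comp he) hsnd)
  calc φ.comp e = (φ.comp e).comp e := congrArg φ.comp hee.symm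
    _ = (inl η).comp (((fst η).comp (φ.comp e)).comp e) :=
        congrArg (VertexMap.comp · e) (eq_inl_comp hsnd)
    _ = 0 := hfst ▸ funext fun i => (inl η i).comp_zero

variable (η)

theorem dimVec_eq : (extension η).dimVec = V.dimVec + U.dimVec :=
  funext fun _ => Module.finrank_prod

end extension

/-! ### Bricks are rigid -/

/-- A representation `total` with an epimorphism onto `B` and a linear section of it, which need
not be a morphism. The section is what lifts classes in `Ext¹(B, B)` to `Ext¹(B, total)`. -/
structure Cover (B : QRep k I E s t) where
  total : QRep k I E s t
  proj : VertexMap total B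
  sec : VertexMap B total
  isHom_proj : IsHom proj
  proj_sec : ∀ i v, proj i (sec i v) = v

namespace Cover

variable {B X : QRep k I E s t}

/-- A lift of the class `η ∈ Ext¹(B, B)` along `C.proj`. -/
def lift (C : Cover B) (η : ArrowMap B B) : ArrowMap B C.total := fun e => C.sec (t e) ∘ₗ η e

/-- The representation with a filtration by `n + 1` copies of `B` in which consecutive copies
are glued by `η`. -/
def tower (η : ArrowMap B B) : ℕ → Cover B
  | 0 => ⟨B, VertexMap.id B, VertexMap.id B, isHom_id B, fun _ _ => rfl⟩
  | n + 1 => ⟨extension ((tower η n).lift η), extension.snd _, extension.inr _,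
      extension.isHom_snd _, fun _ _ => rfl⟩

theorem dimVec_tower (η : ArrowMap B B) (n : ℕ) :
    (tower η n).total.dimVec = (n + 1) • B.dimVec := by
  induction n with
  | zero => exact (one_smul ℕ B.dimVec).symm
  | succ n ih =>
    rw [succ_nsmul, ← ih]
    exact extension.dimVec_eq _

theorem proj_ne_zero (hB : ¬ B.IsTrivial) (C : Cover B) : C.proj ≠ 0 := by
  refine fun hproj => hB (isTrivial_of_forall_eq_zero fun i v => ?_)
  rw [← C.proj_sec i v, hproj]
  rfl

theorem exists_eq_smul_snd (hB : B.IsBrick) {η : ArrowMap B B}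
    (hη : η ∉ LinearMap.range (coboundary B B)) (C : Cover B)
    (hC : ∀ ψ : VertexMap C.total B, IsHom ψ → ∃ c : k, ψ = c • C.proj)
    {ψ : VertexMap (extension (C.lift η)) B} (hψ : IsHom ψ) :
    ∃ c : k, ψ = c • extension.snd (C.lift η) := by
  obtain ⟨c, hc⟩ := hC _ (hψ.comp (extension.isHom_inl _))
  have hcob : coboundary B B (ψ.comp (extension.inr _)) = c • η := by
    rw [extension.coboundary_comp_inr hψ, hc]
    ext e v
    exact congrArg (c • ·) (C.proj_sec _ _)
  have hc_zero : c = 0 := by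
    by_contra hne
    refine hη ⟨c⁻¹ • ψ.comp (extension.inr _), ?_⟩
    rw [map_smul, hcob, inv_smul_smul₀ hne]
  have hinl : ψ.comp (extension.inl _) = 0 := by rw [hc, hc_zero, zero_smul]
  obtain ⟨a, ha⟩ := hB.2 _ (extension.isHom_comp_inr hψ hinl)
  exact ⟨a, (extension.eq_comp_snd hinl).trans (congrArg (VertexMap.comp · _) ha)⟩

theorem exists_eq_smul_proj_tower (hB : B.IsBrick) {η : ArrowMap B B}
    (hη : η ∉ LinearMap.range (coboundary B B)) :
    ∀ (n : ℕ) (ψ : VertexMap (tower η n).total B), IsHom ψ →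
      ∃ c : k, ψ = c • (tower η n).proj
  | 0 => hB.2
  | n + 1 => fun _ => exists_eq_smul_snd hB hη _ (exists_eq_smul_proj_tower hB hη n)

theorem comp_eq_zero_of_idempotent {e : VertexMap X X} (he : IsHom e)
    (hee : e.comp e = e) (hB : ∀ ψ : VertexMap X B, IsHom ψ → ψ.comp e = 0)
    (η : ArrowMap B B) :
    ∀ (n : ℕ) (φ : VertexMap X (tower η n).total), IsHom φ → φ.comp e = 0
  | 0 => hB
  | n + 1 => fun _ => extension.comp_eq_zero_of_idempotent he hee hB
      (comp_eq_zero_of_idempotent he hee hB η n)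

theorem indecomposable_tower (hB : B.IsBrick) {η : ArrowMap B B}
    (hη : η ∉ LinearMap.range (coboundary B B)) (n : ℕ) :
    (tower η n).total.Indecomposable := by
  refine indecomposable_of_homs_eq_smul (tower η n).isHom_proj ((tower η n).proj_ne_zero hB.1)
    (exists_eq_smul_proj_tower hB hη n) fun e he hee hproj => ?_
  refine comp_eq_zero_of_idempotent he hee (fun ψ hψ => ?_) η n _ (isHom_id _)
  obtain ⟨c, rfl⟩ := exists_eq_smul_proj_tower hB hη n ψ hψ
  exact (congrArg (c • ·) hproj).trans (smul_zero c)

end Cover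

/-- Bounded representation type: at each vertex, the dimensions of the indecomposable
representations are bounded. -/
def BoundedRepType (k : Type) [Field k] (I E : Type) (s t : E → I) : Prop :=
  ∀ i, ∃ N : ℕ, ∀ M : QRep k I E s t, M.Indecomposable → M.dimVec i ≤ N

theorem BoundedRepType.of_finiteRepType (h : FiniteRepType k I E s t) :
    BoundedRepType k I E s t := by
  obtain ⟨n, F, hF⟩ := h
  refine fun i => ⟨∑ a, (F a).dimVec i, fun M hM => ?_⟩
  obtain ⟨a, ha⟩ := hF M hM
  rw [ha.dimVec_eq]
  exact Finset.single_le_sum (f := fun a => (F a).dimVec i) (by simp) (Finset.mem_univ a)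

theorem IsBrick.isRigid {B : QRep k I E s t} (hB : B.IsBrick)
    (hQ : BoundedRepType k I E s t) : B.IsRigid := by
  by_contra hrigid
  obtain ⟨η, hη⟩ := not_forall.mp hrigid
  obtain ⟨i, hi⟩ : ∃ i, B.dimVec i ≠ 0 :=
    Function.ne_iff.mp (mt isTrivial_iff_dimVec_eq_zero.mpr hB.1)
  obtain ⟨N, hN⟩ := hQ i
  have hle := hN _ (Cover.indecomposable_tower hB hη N)
  rw [Cover.dimVec_tower, Pi.smul_apply, smul_eq_mul] at hle
  exact absurd hle (Nat.not_le.mpr (Nat.lt_of_lt_of_le N.lt_succ_self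
    (Nat.le_mul_of_pos_right _ (Nat.pos_of_ne_zero hi))))

/-! ### Indecomposables are bricks -/

section TotalDim

variable [Fintype I] {M N L A B : QRep k I E s t}

/-- The total dimension `∑ᵢ dim Mᵢ`. -/
noncomputable def totalDim (M : QRep k I E s t) : ℕ := ∑ i, M.dimVec i

/-- The total rank `∑ᵢ rank φᵢ`. -/
noncomputable def VertexMap.rank (φ : VertexMap M N) : ℕ :=
  ∑ i, Module.finrank k (LinearMap.range (φ i))

theorem totalDim_pos (hM : ¬ M.IsTrivial) : 0 < M.totalDim := by
  refine Nat.pos_of_ne_zero fun hzero => hM (isTrivial_iff_dimVec_eq_zero.mpr ?_)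
  exact funext fun i => Finset.sum_eq_zero_iff.mp hzero i (Finset.mem_univ i)

theorem Iso.totalDim_eq_add (h : M.Iso (A.dsum B)) :
    M.totalDim = A.totalDim + B.totalDim := by
  simp only [totalDim, h.dimVec_eq, dimVec_dsum, Pi.add_apply, Finset.sum_add_distrib]

theorem Retract.totalDim_le (r : Retract A M) : A.totalDim ≤ M.totalDim :=
  Finset.sum_le_sum fun i _ => LinearMap.finrank_le_finrank_of_injective
    (Function.LeftInverse.injective (r.π_ι i))

theorem totalDim_ker_lt {φ : VertexMap M N} (hφ : IsHom φ) (hne : φ ≠ 0) :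
    (sub hφ.isSubrep_ker).totalDim < M.totalDim := by
  obtain ⟨i, hi⟩ := Function.ne_iff.mp hne
  exact Finset.sum_lt_sum (fun j _ => Submodule.finrank_le _)
    ⟨i, Finset.mem_univ i, Submodule.finrank_lt (mt LinearMap.ker_eq_top.mp hi)⟩

theorem VertexMap.ker_eq_of_rank_le {φ : VertexMap M N} {ψ : VertexMap M L}
    (hker : ∀ i, LinearMap.ker (φ i) ≤ LinearMap.ker (ψ i)) (hrank : φ.rank ≤ ψ.rank) (i : I) :
    LinearMap.ker (φ i) = LinearMap.ker (ψ i) := by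
  have hφ := fun j => (φ j).finrank_range_add_finrank_ker
  have hψ := fun j => (ψ j).finrank_range_add_finrank_ker
  have hle : ∀ j ∈ Finset.univ, Module.finrank k (LinearMap.range (ψ j)) ≤
      Module.finrank k (LinearMap.range (φ j)) := fun j _ => by
    have := Submodule.finrank_mono (hker j)
    have := hφ j
    have := hψ j
    lia
  have hrange := (Finset.sum_eq_sum_iff_of_le hle).mp
    ((Finset.sum_le_sum hle).antisymm hrank) i (Finset.mem_univ i)
  refine Submodule.eq_of_le_of_finrank_eq (hker i) ?_
  have := hφ i
  have := hψ i
  lia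

theorem VertexMap.ker_eq_of_rank_le_comp {φ : VertexMap M N} {ψ : VertexMap M L}
    {χ : VertexMap L A} (hker : ∀ i, LinearMap.ker (φ i) ≤ LinearMap.ker (ψ i))
    (hrank : φ.rank ≤ (χ.comp ψ).rank) (i : I) :
    LinearMap.ker (φ i) = LinearMap.ker (ψ i) := by
  have hψχ : ∀ j, LinearMap.ker (ψ j) ≤ LinearMap.ker (χ.comp ψ j) := fun j =>
    LinearMap.ker_le_ker_comp _ _
  refine (hker i).antisymm ((hψχ i).trans_eq (ker_eq_of_rank_le ?_ hrank i).symm)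
  exact fun j => (hker j).trans (hψχ j)

end TotalDim

section KrullSchmidt

variable [Finite I]

/-- The existence half of the Krull–Schmidt theorem, as an induction principle. -/
theorem induction_dsum {p : QRep k I E s t → Prop} (trivial : ∀ M, M.IsTrivial → p M)
    (indecomposable : ∀ M, M.Indecomposable → p M)
    (dsum : ∀ M A B, M.Iso (A.dsum B) → p A → p B → p M) (M : QRep k I E s t) : p M := by
  cases nonempty_fintype I
  induction hn : M.totalDim using Nat.strong_induction_on generalizing M with
  | _ n ih =>
    by_cases htriv : M.IsTrivial
    · exact trivial M htriv
    by_cases hM : M.Indecomposable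
    · exact indecomposable M hM
    obtain ⟨A, B, hA, hB, hiso⟩ : ∃ A B : QRep k I E s t, ¬ A.IsTrivial ∧ ¬ B.IsTrivial ∧
        M.Iso (A.dsum B) := by
      by_contra! hnone
      exact hM ⟨htriv, hnone⟩
    have hadd := hiso.totalDim_eq_add
    have hApos := totalDim_pos hA
    have hBpos := totalDim_pos hB
    exact dsum M A B hiso (ih _ (by lia) A rfl) (ih _ (by lia) B rfl)

theorem exists_indecomposable_retract (M : QRep k I E s t) {i : I} {v : M.V i} (hv : v ≠ 0) :
    ∃ (A : QRep k I E s t) (r : Retract A M), A.Indecomposable ∧ r.π i v ≠ 0 := by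
  induction M using induction_dsum with
  | trivial M hM => exact absurd ((hM i).elim v 0) hv
  | indecomposable M hM => exact ⟨M, Retract.refl M, hM, hv⟩
  | dsum M A B hiso ihA ihB =>
    obtain ⟨a, b, hab⟩ := hiso.exists_complementary
    by_cases ha : a.π i v = 0
    · have hb : b.π i v ≠ 0 := fun hb =>
        hv (by rw [← hab i v, ha, hb, map_zero, map_zero, add_zero])
      obtain ⟨C, r, hC, hr⟩ := ihB hb
      exact ⟨C, r.trans b, hC, hr⟩
    · obtain ⟨C, r, hC, hr⟩ := ihA ha
      exact ⟨C, r.trans a, hC, hr⟩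

end KrullSchmidt

section Ringel

variable {M N B : QRep k I E s t}

theorem exists_comp_eq_of_ker_le {K U V W : Type*} [DivisionRing K] [AddCommGroup U]
    [Module K U] [AddCommGroup V] [Module K V] [AddCommGroup W] [Module K W]
    {f : U →ₗ[K] V} {g : U →ₗ[K] W} (h : LinearMap.ker f ≤ LinearMap.ker g) :
    ∃ q : V →ₗ[K] W, q ∘ₗ f = g := by
  obtain ⟨q, hq⟩ := LinearMap.exists_extend
    ((LinearMap.ker f).liftQ g h ∘ₗ f.quotKerEquivRange.symm.toLinearMap)
  refine ⟨q, LinearMap.ext fun u => ?_⟩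
  have hu := LinearMap.congr_fun hq ⟨f u, LinearMap.mem_range_self f u⟩
  simpa [LinearMap.quotKerEquivRange_symm_apply_image] using hu

/-- The obstruction lies in `Ext¹(im ρ, N)`, which vanishes with `Ext¹(B, N)` because path algebras
are hereditary. -/
theorem ExtVanishes.exists_extend {ρ : VertexMap M B} (hext : ExtVanishes B N) (hρ : IsHom ρ)
    {P : ∀ i, Submodule k (M.V i)} (hP : M.IsSubrep P) (hPρ : ∀ i, P i = LinearMap.ker (ρ i))
    {g : VertexMap (sub hP) N} (hg : IsHom g) :
    ∃ φ : VertexMap M N, IsHom φ ∧ φ.comp (incl hP) = g := by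
  choose p hp using fun i => LinearMap.exists_extend (p := P i) (g i)
  have hp' : VertexMap.comp p (incl hP) = g := funext hp
  have hker : ∀ e, LinearMap.ker (ρ (s e)) ≤ LinearMap.ker (coboundary M N p e) := fun e v hv => by
    rw [← hPρ] at hv
    have hcob := coboundary_comp_hom (isHom_incl hP) p
    rw [hp', hg.coboundary_eq_zero] at hcob
    exact (LinearMap.congr_fun (congrFun hcob e) ⟨v, hv⟩).symm
  choose η hη using fun e => exists_comp_eq_of_ker_le (hker e)
  obtain ⟨ψ, rfl⟩ := hext η
  refine ⟨p - ψ.comp ρ, ?_, ?_⟩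
  · rw [isHom_iff_coboundary_eq_zero, map_sub, coboundary_comp_hom hρ, sub_eq_zero]
    exact (funext hη).symm
  · refine Eq.trans ?_ hp'
    ext i v
    have hv : ρ i (incl hP i v) = 0 := by
      rw [← LinearMap.mem_ker, ← hPρ]
      exact incl_mem hP i v
    simp [hv]

theorem exists_hom_ker_ne_bot [IsAlgClosed k] (hM : ¬ M.IsTrivial) (hbrick : ¬ M.IsBrick) :
    ∃ φ : VertexMap M M, IsHom φ ∧ φ ≠ 0 ∧ ∃ i, LinearMap.ker (φ i) ≠ ⊥ := by
  obtain ⟨ψ, hψ, hscalar⟩ : ∃ ψ : VertexMap M M, IsHom ψ ∧ ∀ c : k, ψ ≠ c • VertexMap.id M := by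
    by_contra! hall
    exact hbrick ⟨hM, hall⟩
  obtain ⟨i, hi⟩ := not_forall.mp hM
  have : Nontrivial (M.V i) := not_subsingleton_iff_nontrivial.mp hi
  obtain ⟨c, hc⟩ := Module.End.exists_eigenvalue (ψ i)
  refine ⟨ψ - c • VertexMap.id M, hψ.sub ((isHom_id M).smul c), sub_ne_zero.mpr (hscalar c), i, ?_⟩
  obtain ⟨v, hv⟩ := hc.exists_hasEigenvector
  refine (Submodule.ne_bot_iff _).mpr ⟨v, ?_, hv.2⟩
  exact sub_eq_zero.mpr hv.apply_eq_smul

theorem Indecomposable.exists_square_zero_of_not_isBrick [Fintype I] [IsAlgClosed k]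
    (hM : M.Indecomposable) (hbrick : ¬ M.IsBrick) :
    ∃ θ : VertexMap M M, IsHom θ ∧ θ ≠ 0 ∧ (∀ i v, θ i (θ i v) = 0) ∧
      ∀ χ : VertexMap M M, IsHom χ → χ ≠ 0 → θ.rank ≤ χ.rank := by
  obtain ⟨φ, hφ, hφ_ne, i, hi⟩ := exists_hom_ker_ne_bot hM.1 hbrick
  obtain ⟨θ, ⟨hθ, hθ_ne⟩, hmin⟩ := exists_minimalFor_of_wellFoundedLT
    (fun χ : VertexMap M M => IsHom χ ∧ χ ≠ 0) VertexMap.rank ⟨φ, hφ, hφ_ne⟩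
  replace hmin : ∀ χ : VertexMap M M, IsHom χ → χ ≠ 0 → θ.rank ≤ χ.rank := fun χ hχ hne =>
    (le_total _ _).elim id (hmin ⟨hχ, hne⟩)
  refine ⟨θ, hθ, hθ_ne, ?_, hmin⟩
  by_contra! hsq
  obtain ⟨j, w, hw⟩ := hsq
  have hne : θ.comp θ ≠ 0 := fun hzero => hw (LinearMap.congr_fun (congrFun hzero j) w)
  have hker := VertexMap.ker_eq_of_rank_le (fun _ => LinearMap.ker_le_ker_comp _ _)
    (hmin _ (hθ.comp hθ) hne)
  rcases hM.ker_eq_bot_or_eq_zero hθ fun i v hv => (hker i).ge hv with hinj | hzero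
  · have hker_φ := VertexMap.ker_eq_of_rank_le (fun j => (hinj j).trans_le bot_le)
      (hmin φ hφ hφ_ne) i
    exact hi (hker_φ.symm.trans (hinj i))
  · exact hθ_ne hzero

/-- Ringel's argument: if the summand `A` of `ker θ` were rigid, its projection `ker θ → A` would
extend to `M`, making `A` a proper summand of `M`. -/
theorem Indecomposable.exists_not_isRigid_of_not_isBrick [Fintype I] [IsAlgClosed k]
    (hM : M.Indecomposable) (hbrick : ¬ M.IsBrick) :
    ∃ A : QRep k I E s t, A.Indecomposable ∧ A.totalDim < M.totalDim ∧ ¬ A.IsRigid := by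
  obtain ⟨θ, hθ, hθ_ne, hsq, hmin⟩ := hM.exists_square_zero_of_not_isBrick hbrick
  let hK := hθ.isSubrep_ker
  obtain ⟨i, v, hv⟩ := VertexMap.exists_apply_ne_zero hθ_ne
  have hv' : corestrict hK θ hsq i v ≠ 0 := fun hzero => hv (congrArg Subtype.val hzero)
  obtain ⟨A, r, hA, hr⟩ := exists_indecomposable_retract _ hv'
  refine ⟨A, hA, r.totalDim_le.trans_lt (totalDim_ker_lt hθ hθ_ne), fun hrigid => hθ_ne ?_⟩
  have hρ : IsHom (r.π.comp (corestrict hK θ hsq)) := r.isHom_π.comp (hθ.corestrict hK hsq)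
  have hι : IsHom ((incl hK).comp r.ι) := (isHom_incl hK).comp r.isHom_ι
  have hker : ∀ j, LinearMap.ker (θ j) = LinearMap.ker (r.π.comp (corestrict hK θ hsq) j) := by
    refine VertexMap.ker_eq_of_rank_le_comp (fun j w hw => ?_)
      (hmin _ (hι.comp hρ) fun hzero => hr ?_)
    · have hθw : corestrict hK θ hsq j w = 0 := Subtype.ext hw
      exact (congrArg (r.π j) hθw).trans (map_zero _)
    · have hιv : r.ι i (r.π i (corestrict hK θ hsq i v)) = 0 :=
        incl_injective hK i (LinearMap.congr_fun (congrFun hzero i) v)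
      rw [← r.π_ι i (r.π i _), hιv, map_zero]
  obtain ⟨φ, hφ, hφr⟩ := hrigid.exists_extend hρ hK hker r.isHom_π
  let q : Retract A M := ⟨(incl hK).comp r.ι, φ, hι, hφ, fun j a =>
    (LinearMap.congr_fun (congrFun hφr j) (r.ι j a)).trans (r.π_ι j a)⟩
  ext j w
  rw [← hM.ι_π_eq_self hA.1 q j w]
  exact incl_mem hK j _

theorem Indecomposable.isBrick [Finite I] [IsAlgClosed k] (hQ : BoundedRepType k I E s t)
    (hM : M.Indecomposable) : M.IsBrick := by
  cases nonempty_fintype I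
  induction hn : M.totalDim using Nat.strong_induction_on generalizing M with
  | _ n ih =>
    by_contra hbrick
    obtain ⟨A, hA, hlt, hrigid⟩ := hM.exists_not_isRigid_of_not_isBrick hbrick
    exact hrigid ((ih _ (hn ▸ hlt) hA rfl).isRigid hQ)

theorem Indecomposable.isRigid [Finite I] [IsAlgClosed k] (hQ : BoundedRepType k I E s t)
    (hM : M.Indecomposable) : M.IsRigid :=
  (hM.isBrick hQ).isRigid hQ

end Ringel

/-! ### The Euler form -/

section HomDim

variable [Finite I] {M N : QRep k I E s t}

theorem homDim_pos_iff :
    0 < homDim M N ↔ ∃ φ : VertexMap M N, IsHom φ ∧ φ ≠ 0 := by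
  rw [homDim, Module.finrank_pos_iff, Submodule.nontrivial_iff_ne_bot, Submodule.ne_bot_iff]
  simp only [mem_homs]

theorem isBrick_iff_homDim_eq_one :
    M.IsBrick ↔ homDim M M = 1 := by
  by_cases hM : M.IsTrivial
  · refine ⟨fun hbrick => absurd hM hbrick.1, fun hdim => ?_⟩
    obtain ⟨φ, -, hφ⟩ := homDim_pos_iff.mp (hdim ▸ one_pos)
    obtain ⟨i, v, hv⟩ := VertexMap.exists_apply_ne_zero hφ
    exact absurd ((hM i).elim _ _) hv
  · let idHom : homs M M := ⟨VertexMap.id M, mem_homs.mpr (isHom_id M)⟩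
    have hne : idHom ≠ 0 := fun hzero =>
      hM (isTrivial_iff_id_eq_zero.mpr (congrArg Subtype.val hzero))
    rw [homDim, finrank_eq_one_iff_of_nonzero' idHom hne]
    refine ⟨fun hbrick ψ => ?_, fun hall => ⟨hM, fun ψ hψ => ?_⟩⟩
    · obtain ⟨c, hc⟩ := hbrick.2 ψ.1 (mem_homs.mp ψ.2)
      exact ⟨c, Subtype.ext hc.symm⟩
    · obtain ⟨c, hc⟩ := hall ⟨ψ, mem_homs.mpr hψ⟩
      exact ⟨c, (congrArg Subtype.val hc).symm⟩

end HomDim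

section EulerForm

variable [Fintype I] [Fintype E]

/-- The Euler form `⟨α, β⟩ = ∑ᵢ αᵢ βᵢ - ∑ₑ α_{s(e)} β_{t(e)}`, whose quadratic form is the Tits
form. -/
def eulerForm (I E : Type) [Fintype I] [Fintype E] (s t : E → I) (α β : I → ℕ) : ℤ :=
  ∑ i, (α i : ℤ) * β i - ∑ e, (α (s e) : ℤ) * β (t e)

theorem eulerForm_self (α : I → ℕ) : eulerForm I E s t α α = titsForm I E s t α := by
  simp only [eulerForm, titsForm, sq]

theorem eulerForm_add_right (α β γ : I → ℕ) :
    eulerForm I E s t α (β + γ) = eulerForm I E s t α β + eulerForm I E s t α γ := by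
  simp only [eulerForm, Pi.add_apply, Nat.cast_add, mul_add, Finset.sum_add_distrib]
  ring

variable {M N : QRep k I E s t}

theorem eulerForm_dimVec (M N : QRep k I E s t) :
    eulerForm I E s t M.dimVec N.dimVec = homDim M N - extDim M N := by
  have hvertex : Module.finrank k (VertexMap M N) = ∑ i, M.dimVec i * N.dimVec i := by
    simp only [VertexMap, Module.finrank_pi_fintype, Module.finrank_linearMap, dimVec]
  have harrow : Module.finrank k (ArrowMap M N) = ∑ e, M.dimVec (s e) * N.dimVec (t e) := by
    simp only [ArrowMap, Module.finrank_pi_fintype, Module.finrank_linearMap, dimVec]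
  have hext : extDim M N + Module.finrank k (LinearMap.range (coboundary M N)) =
      ∑ e, M.dimVec (s e) * N.dimVec (t e) :=
    (Submodule.finrank_quotient_add_finrank _).trans harrow
  have hhom : Module.finrank k (LinearMap.range (coboundary M N)) + homDim M N =
      ∑ i, M.dimVec i * N.dimVec i :=
    (coboundary M N).finrank_range_add_finrank_ker.trans hvertex
  simp only [eulerForm, ← Nat.cast_mul, ← Nat.cast_sum, ← hext, ← hhom, Nat.cast_add]
  ring

theorem ExtVanishes.eulerForm_eq_homDim (h : ExtVanishes M N) :
    eulerForm I E s t M.dimVec N.dimVec = homDim M N := by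
  have hsub : Subsingleton (ArrowMap M N ⧸ LinearMap.range (coboundary M N)) :=
    Submodule.Quotient.subsingleton_iff.mpr (LinearMap.range_eq_top.mpr h)
  rw [eulerForm_dimVec, extDim, Module.finrank_zero_of_subsingleton, Nat.cast_zero, sub_zero]

theorem IsHom.eulerForm_pos {φ : VertexMap M N} (hφ : IsHom φ) (hne : φ ≠ 0)
    (hext : ExtVanishes M N) : 0 < eulerForm I E s t M.dimVec N.dimVec := by
  rw [hext.eulerForm_eq_homDim, Nat.cast_pos]
  exact homDim_pos_iff.mpr ⟨φ, hφ, hne⟩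

theorem exists_hom_ne_zero_of_eulerForm_pos
    (h : 0 < eulerForm I E s t M.dimVec N.dimVec) : ∃ φ : VertexMap M N, IsHom φ ∧ φ ≠ 0 := by
  rw [eulerForm_dimVec] at h
  exact homDim_pos_iff.mp (by lia)

/-- If the image of a nonzero morphism `M → N` were proper, both the image (a quotient of `M`)
and the cokernel (a quotient of `N`) would contribute at least `1` to `q(dim M) = 1`. -/
theorem IsRigid.iso_of_dimVec_eq (hM : M.IsRigid) (hN : N.IsRigid) (hdim : M.dimVec = N.dimVec)
    (hq : titsForm I E s t M.dimVec = 1) : M.Iso N := by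
  have hMN : eulerForm I E s t M.dimVec N.dimVec = 1 := by rw [← hdim, eulerForm_self, hq]
  obtain ⟨φ, hφ, hne⟩ := exists_hom_ne_zero_of_eulerForm_pos (hMN ▸ one_pos)
  let hR := hφ.isSubrep_range
  have himage : 0 < eulerForm I E s t M.dimVec (sub hR).dimVec := by
    have hφR : IsHom (corestrict hR φ fun i => LinearMap.mem_range_self (φ i)) := hφ.corestrict hR _
    refine hφR.eulerForm_pos (fun hzero => hne ?_) (hM.of_surjective hφR ?_)
    · ext i v
      exact congrArg Subtype.val (LinearMap.congr_fun (congrFun hzero i) v)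
    · exact fun i => LinearMap.surjective_rangeRestrict (φ i)
  have hcoker : (quot hR).IsTrivial := by
    by_contra htriv
    have hcoker : 0 < eulerForm I E s t M.dimVec (quot hR).dimVec := by
      rw [hdim]
      refine (isHom_mkQ hR).eulerForm_pos (fun hzero => htriv ?_)
        (hN.of_surjective (isHom_mkQ hR) (mkQ_surjective hR))
      refine isTrivial_of_forall_eq_zero fun i v => ?_
      obtain ⟨w, rfl⟩ := mkQ_surjective hR i v
      exact LinearMap.congr_fun (congrFun hzero i) w
    rw [← dimVec_quot_add_dimVec_sub hR, eulerForm_add_right] at hMN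
    lia
  refine hφ.iso_of_bijective fun i => ?_
  have hsurj : Function.Surjective (φ i) := fun w =>
    (mkQ_eq_zero_iff hR).mp ((hcoker i).elim _ _)
  exact ⟨(LinearMap.injective_iff_surjective_of_finrank_eq_finrank (congrFun hdim i)).mpr hsurj,
    hsurj⟩

end EulerForm

/-! ### Rigid representations with a given dimension vector -/

section GenericRepresentation

theorem finrank_le_add_of_ker_le_range {K A B C : Type*} [DivisionRing K] [AddCommGroup A]
    [Module K A] [AddCommGroup B] [Module K B] [AddCommGroup C] [Module K C]
    [FiniteDimensional K A] [FiniteDimensional K B] {f : A →ₗ[K] B} {g : B →ₗ[K] C}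
    (h : LinearMap.ker g ≤ LinearMap.range f) :
    Module.finrank K B ≤ Module.finrank K A + Module.finrank K (LinearMap.range g) := by
  have hker := (Submodule.finrank_mono h).trans (LinearMap.finrank_range_le f)
  have hg := g.finrank_range_add_finrank_ker
  lia

variable [Finite I] {U V N X : QRep k I E s t} (η : ArrowMap U V)

theorem extension.homDim_left_le_rank (N : QRep k I E s t) :
    homDim (extension η) N ≤
      homDim U N + Module.finrank k (LinearMap.range (precomp (isHom_inl η) N)) := by
  refine finrank_le_add_of_ker_le_range (f := precomp (isHom_snd η) N) fun ψ hψ => ?_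
  have hinl : ψ.1.comp (inl η) = 0 := congrArg Subtype.val hψ
  exact ⟨⟨_, mem_homs.mpr (isHom_comp_inr (mem_homs.mp ψ.2) hinl)⟩,
    Subtype.ext (eq_comp_snd hinl).symm⟩

theorem extension.homDim_left_le (N : QRep k I E s t) :
    homDim (extension η) N ≤ homDim U N + homDim V N :=
  (homDim_left_le_rank η N).trans (Nat.add_le_add_left (Submodule.finrank_le _) _)

theorem extension.homDim_right_le (N : QRep k I E s t) :
    homDim N (extension η) ≤ homDim N V + homDim N U := by
  refine (finrank_le_add_of_ker_le_range (f := postcomp (isHom_inl η) N)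
    (g := postcomp (isHom_snd η) N) fun φ hφ => ?_).trans
    (Nat.add_le_add_left (Submodule.finrank_le _) _)
  have hsnd : (snd η).comp φ.1 = 0 := congrArg Subtype.val hφ
  exact ⟨⟨_, mem_homs.mpr (isHom_fst_comp (mem_homs.mp φ.2) hsnd)⟩,
    Subtype.ext (eq_inl_comp hsnd).symm⟩

variable {η}

/-- The inequality is strict because `id_V` extends to `extension η` only if `η` splits. -/
theorem extension.homDim_left_lt (hη : η ∉ LinearMap.range (coboundary U V)) :
    homDim (extension η) V < homDim U V + homDim V V := by
  refine (homDim_left_le_rank η V).trans_lt (Nat.add_lt_add_left (Submodule.finrank_lt ?_) _)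
  rw [Ne, LinearMap.range_eq_top]
  intro hsurj
  obtain ⟨ψ, hψ⟩ := hsurj ⟨VertexMap.id V, mem_homs.mpr (isHom_id V)⟩
  have hinl : ψ.1.comp (inl η) = VertexMap.id V := congrArg Subtype.val hψ
  exact hη ⟨_, (coboundary_comp_inr (mem_homs.mp ψ.2)).trans (by rw [hinl]; rfl)⟩

theorem extension.homDim_self_lt (hX : X.Iso (U.dsum V))
    (hη : η ∉ LinearMap.range (coboundary U V)) :
    homDim (extension η) (extension η) < homDim X X := by
  calc homDim (extension η) (extension η)
      ≤ homDim (extension η) V + homDim (extension η) U := homDim_right_le η _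
    _ < (homDim U V + homDim V V) + (homDim U U + homDim V U) :=
        Nat.add_lt_add_of_lt_of_le (homDim_left_lt hη) (homDim_left_le η U)
    _ ≤ homDim X V + homDim X U :=
        Nat.add_le_add (hX.homDim_add_le_left V) (hX.homDim_add_le_left U)
    _ ≤ homDim X X := (add_comm _ _).trans_le (hX.homDim_add_le_right X)

theorem isRigid_of_forall_iso_dsum (hind : ∀ A : QRep k I E s t, A.Indecomposable → A.IsRigid)
    (hX : ∀ U V : QRep k I E s t, X.Iso (U.dsum V) → ExtVanishes U V) : X.IsRigid := by
  suffices hretract : ∀ C : QRep k I E s t, Retract C X → ExtVanishes C X from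
    hretract X (Retract.refl X)
  intro C r
  induction C using induction_dsum with
  | trivial C hC => exact .of_isTrivial hC X
  | indecomposable C hC =>
    exact .of_iso_dsum_right r.iso_dsum_ker (hind C hC) (hX _ _ r.iso_dsum_ker)
  | dsum C A B hiso ihA ihB =>
    obtain ⟨a, b, -⟩ := hiso.exists_complementary
    exact .of_iso_dsum_left hiso (ihA (a.trans r)) (ihB (b.trans r))

theorem exists_dimVec_eq (k : Type) [Field k] {I E : Type} (s t : E → I) (α : I → ℕ) :
    ∃ M : QRep k I E s t, M.dimVec = α :=
  ⟨{ V := fun i => Fin (α i) → k, f := fun _ => 0 }, funext fun _ => Module.finrank_fin_fun k⟩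

/-- Minimising `dim End` among representations with a given dimension vector replaces the choice
of an orbit of maximal dimension in the representation space. -/
theorem exists_isRigid_dimVec_eq (hind : ∀ A : QRep k I E s t, A.Indecomposable → A.IsRigid)
    (α : I → ℕ) : ∃ X : QRep k I E s t, X.IsRigid ∧ X.dimVec = α := by
  obtain ⟨X, hXα, hmin⟩ := exists_minimalFor_of_wellFoundedLT
    (fun X : QRep k I E s t => X.dimVec = α) (fun X => homDim X X) (exists_dimVec_eq k s t α)
  refine ⟨X, isRigid_of_forall_iso_dsum hind fun U V hiso => ?_, hXα⟩
  by_contra hext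
  obtain ⟨η, hη⟩ := not_forall.mp hext
  have hdim : (extension η).dimVec = α := by
    rw [extension.dimVec_eq, add_comm, ← dimVec_dsum, ← hiso.dimVec_eq, hXα]
  have hlt := extension.homDim_self_lt hiso hη
  exact hlt.not_ge (hmin hdim hlt.le)

end GenericRepresentation

end QRep

open QRep in
theorem stmt11_general (k : Type) [Field k] [IsAlgClosed k] (I E : Type) [Fintype I] [Fintype E]
    (s t : E → I) (hQ : BoundedRepType k I E s t) :
    (∀ M : QRep k I E s t, M.Indecomposable →
      QRep.dimVec M ≠ 0 ∧ titsForm I E s t (QRep.dimVec M) = 1) ∧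
    (∀ α : I → ℕ, titsForm I E s t α = 1 →
      ∃ M : QRep k I E s t, M.Indecomposable ∧ QRep.dimVec M = α) ∧
    (∀ M N : QRep k I E s t, M.Indecomposable → N.Indecomposable →
      QRep.dimVec M = QRep.dimVec N → M.Iso N) := by
  have htits : ∀ M : QRep k I E s t, M.IsRigid → titsForm I E s t M.dimVec = homDim M M :=
    fun M hM => (eulerForm_self _).symm.trans hM.eulerForm_eq_homDim
  have hroot : ∀ M : QRep k I E s t, M.Indecomposable → titsForm I E s t M.dimVec = 1 :=
    fun M hM => by
      rw [htits M (hM.isRigid hQ), isBrick_iff_homDim_eq_one.mp (hM.isBrick hQ), Nat.cast_one]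
  refine ⟨fun M hM => ⟨mt isTrivial_iff_dimVec_eq_zero.mpr hM.1, hroot M hM⟩, ?_, ?_⟩
  · intro α hα
    obtain ⟨X, hX, rfl⟩ := exists_isRigid_dimVec_eq (fun A hA => hA.isRigid hQ) α
    have hend : homDim X X = 1 := by exact_mod_cast (htits X hX).symm.trans hα
    exact ⟨X, (isBrick_iff_homDim_eq_one.mpr hend).indecomposable, rfl⟩
  · exact fun M N hM hN hdim =>
      (hM.isRigid hQ).iso_of_dimVec_eq (hN.isRigid hQ) hdim (hroot M hM)

theorem stmt11 (k : Type) [Field k] [IsAlgClosed k] (I E : Type) [Fintype I] [Fintype E]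
    (s t : E → I) (hQ : FiniteRepType k I E s t) :
    -- the dimension vector of an indecomposable is a positive root
    (∀ M : QRep k I E s t, M.Indecomposable →
      QRep.dimVec M ≠ 0 ∧ titsForm I E s t (QRep.dimVec M) = 1) ∧
    -- every positive root arises as the dimension vector of an indecomposable
    (∀ α : I → ℕ, α ≠ 0 → titsForm I E s t α = 1 →
      ∃ M : QRep k I E s t, M.Indecomposable ∧ QRep.dimVec M = α) ∧
    -- two indecomposables with the same dimension vector are isomorphic
    (∀ M N : QRep k I E s t, M.Indecomposable → N.Indecomposable →
      QRep.dimVec M = QRep.dimVec N → M.Iso N) :=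
  let ⟨hroot, hexists, hunique⟩ := stmt11_general k I E s t (.of_finiteRepType hQ)
  ⟨hroot, fun α _ => hexists α, hunique⟩
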